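/- arXiv:2311.10670 — 5 statements merged into one kernel-verified Lean document; each statement's English description precedes it below -/
import Mathlib

section
/- Let X be a bounded real-valued random variable on a probability space (Ω, F, P) that is not P-almost surely constant. Then the map α ↦ C_α(X) = α · log E_P[exp(X/α)] is strictly decreasing on (0, ∞): for all 0 < α₁ < α₂ one has C_{α₂}(X) < C_{α₁}(X). -/
open MeasureTheory Real

/-!
Up to the substitution `t = 1 / α`, the certainty equivalent is `cgf X P t / t`. For `0 < s < t`,
the strict Jensen inequality for the strictly convex power `x ↦ x ^ (t / s)`, applied to
`exp (s * X)`, gives `E[exp (s * X)] ^ (t / s) < E[exp (t * X)]`; taking logarithms and dividing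
by `t` shows that this quotient is strictly increasing in `t`.
-/

open ProbabilityTheory

section

variable {Ω : Type*} [MeasurableSpace Ω] {P : Measure Ω} {X : Ω → ℝ} {s t : ℝ}

lemma exists_ae_eq_const_of_exp_mul (ht : t ≠ 0) (h : ∃ c : ℝ, ∀ᵐ ω ∂P, exp (t * X ω) = c) :
    ∃ c : ℝ, ∀ᵐ ω ∂P, X ω = c := by
  obtain ⟨c, hc⟩ := h
  refine ⟨log c / t, ?_⟩
  filter_upwards [hc] with ω hω
  rw [← hω, log_exp, mul_div_cancel_left₀ _ ht]

lemma mul_log_integral_exp_div (P : Measure Ω) (X : Ω → ℝ) (α : ℝ) :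
    α * log (∫ ω, exp (X ω / α) ∂P) = cgf X P α⁻¹ / α⁻¹ := by
  simp only [cgf, mgf, div_eq_inv_mul, inv_inv]

variable [IsProbabilityMeasure P]

lemma rpow_integral_lt_integral_rpow {f : Ω → ℝ} {p : ℝ} (hp : 1 < p) (hf : 0 ≤ᵐ[P] f)
    (hfi : Integrable f P) (hfp : Integrable (fun ω ↦ f ω ^ p) P)
    (hnc : ¬ ∃ c : ℝ, ∀ᵐ ω ∂P, f ω = c) :
    (∫ ω, f ω ∂P) ^ p < ∫ ω, f ω ^ p ∂P := by
  have jensen := (strictConvexOn_rpow hp).ae_eq_const_or_map_average_lt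
    (continuous_rpow_const (zero_le_one.trans hp.le)).continuousOn isClosed_Ici hf hfi hfp
  simp only [average_eq_integral] at jensen
  exact jensen.resolve_left fun hconst ↦ hnc ⟨_, hconst⟩

lemma mgf_rpow_lt_mgf (hs : 0 < s) (hst : s < t) (hint : Integrable (fun ω ↦ exp (t * X ω)) P)
    (hnc : ¬ ∃ c : ℝ, ∀ᵐ ω ∂P, X ω = c) :
    mgf X P s ^ (t / s) < mgf X P t := by
  have hpow (ω : Ω) : exp (s * X ω) ^ (t / s) = exp (t * X ω) := by
    rw [← exp_mul, mul_right_comm, mul_div_cancel₀ _ hs.ne']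
  have hjensen := rpow_integral_lt_integral_rpow ((one_lt_div hs).2 hst)
    (ae_of_all P fun ω ↦ (exp_pos (s * X ω)).le)
    (integrable_exp_mul_of_nonneg_of_le hint hs.le hst.le) (by simpa only [hpow] using hint)
    (mt (exists_ae_eq_const_of_exp_mul hs.ne') hnc)
  simpa only [mgf, hpow] using hjensen

lemma cgf_div_lt_cgf_div (hs : 0 < s) (hst : s < t)
    (hint : Integrable (fun ω ↦ exp (t * X ω)) P) (hnc : ¬ ∃ c : ℝ, ∀ᵐ ω ∂P, X ω = c) :
    cgf X P s / s < cgf X P t / t := by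
  have hpos : 0 < mgf X P s :=
    mgf_pos (integrable_exp_mul_of_nonneg_of_le hint hs.le hst.le)
  have hlog : t / s * cgf X P s < cgf X P t := by
    rw [cgf, cgf, ← log_rpow hpos]
    exact log_lt_log (rpow_pos_of_pos hpos _) (mgf_rpow_lt_mgf hs hst hint hnc)
  rwa [lt_div_iff₀ (hs.trans hst), div_mul_comm]

end

theorem certainty_equivalent_strictAnti_general
    {Ω : Type*} [MeasurableSpace Ω] (P : Measure Ω) [IsProbabilityMeasure P] (X : Ω → ℝ)
    (hnc : ¬ ∃ c : ℝ, ∀ᵐ ω ∂P, X ω = c) (α₁ α₂ : ℝ) (hα₁ : 0 < α₁) (hα : α₁ < α₂)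
    (hint : Integrable (fun ω ↦ exp (X ω / α₁)) P) :
    α₂ * log (∫ ω, exp (X ω / α₂) ∂P) < α₁ * log (∫ ω, exp (X ω / α₁) ∂P) := by
  simp only [div_eq_inv_mul] at hint
  rw [mul_log_integral_exp_div, mul_log_integral_exp_div]
  exact cgf_div_lt_cgf_div (inv_pos.2 (hα₁.trans hα)) (inv_strictAnti₀ hα₁ hα) hint hnc

/-- For a bounded real-valued random variable `X` on a probability space `(Ω, F, P)` that is not
`P`-almost surely constant, the map `α ↦ C_α(X) = α * log (E_P[exp (X/α)])` is strictly
decreasing on `(0, ∞)`. -/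
theorem certainty_equivalent_strictAnti
    {Ω : Type*} [MeasurableSpace Ω] (P : Measure Ω) [IsProbabilityMeasure P]
    (X : Ω → ℝ) (hX : Measurable X) (C : ℝ) (hC : ∀ ω, |X ω| ≤ C)
    (hnc : ¬ ∃ c : ℝ, ∀ᵐ ω ∂P, X ω = c) :
    ∀ α₁ α₂ : ℝ, 0 < α₁ → α₁ < α₂ →
      α₂ * Real.log (∫ ω, Real.exp (X ω / α₂) ∂P) <
        α₁ * Real.log (∫ ω, Real.exp (X ω / α₁) ∂P) := by
  refine fun α₁ α₂ hα₁ hα ↦ certainty_equivalent_strictAnti_general P X hnc α₁ α₂ hα₁ hα ?_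
  simpa only [div_eq_inv_mul] using integrable_exp_mul_of_mem_Icc (t := α₁⁻¹) hX.aemeasurable
    (ae_of_all P fun ω ↦ abs_le.1 (hC ω))
end

section
/- Let X₁ and X₂ be bounded real-valued random variables on a common probability space (Ω, F, P), let α₁, α₂ > 0, and let λ ∈ [0, 1]. Set β = λα₁ + (1−λ)α₂. Then the certainty equivalent C_α(X) = α · log E_P[exp(X/α)] satisfies the joint convexity inequality C_β(λX₁ + (1−λ)X₂) ≤ λ·C_{α₁}(X₁) + (1−λ)·C_{α₂}(X₂). -/
open MeasureTheory Real

/-!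
The functional `f ↦ log ∫ exp f` is convex: after shifting `f` and `g` by constants so that both
integrals equal `1`, the pointwise convexity of `exp` shows that the integral for a convex
combination is at most `1`. The certainty equivalent `α * log ∫ exp (X / α)` is the perspective
`(α, X) ↦ α • Φ (α⁻¹ • X)` of this functional `Φ`, and perspectives of convex functions are jointly
convex.
-/

section Perspective

theorem inv_smul_combo_eq_combo_inv_smul {𝕜 E : Type*} [Field 𝕜] [AddCommGroup E] [Module 𝕜 E]
    {s t : 𝕜} (hs : s ≠ 0) (ht : t ≠ 0) (a b : 𝕜) (x y : E) :
    (a * s + b * t)⁻¹ • (a • x + b • y) =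
      (a * s / (a * s + b * t)) • s⁻¹ • x + (b * t / (a * s + b * t)) • t⁻¹ • y := by
  simp only [smul_add, smul_smul]
  congr 2 <;> field_simp

variable {𝕜 E F : Type*} [Field 𝕜] [LinearOrder 𝕜] [IsStrictOrderedRing 𝕜]
  [AddCommGroup E] [Module 𝕜 E] [AddCommMonoid F] [PartialOrder F] [Module 𝕜 F]

theorem combo_pos {a b s t : 𝕜} (ha : 0 ≤ a) (hb : 0 ≤ b) (hab : a + b = 1)
    (hs : 0 < s) (ht : 0 < t) : 0 < a * s + b * t :=
  convex_Ioi (0 : 𝕜) hs ht ha hb hab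

theorem convex_perspective_domain {K : Set E} (hK : Convex 𝕜 K) :
    Convex 𝕜 {p : 𝕜 × E | 0 < p.1 ∧ p.1⁻¹ • p.2 ∈ K} := by
  rintro ⟨s, x⟩ ⟨hs : 0 < s, hx⟩ ⟨t, y⟩ ⟨ht : 0 < t, hy⟩ a b ha hb hab
  have hr : 0 < a * s + b * t := combo_pos ha hb hab hs ht
  refine ⟨hr, ?_⟩
  change (a * s + b * t)⁻¹ • (a • x + b • y) ∈ K
  rw [inv_smul_combo_eq_combo_inv_smul hs.ne' ht.ne']
  exact convex_iff_div.1 hK hx hy (by positivity) (by positivity) hr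

theorem convexOn_perspective [PosSMulMono 𝕜 F] {K : Set E} {f : E → F} (hf : ConvexOn 𝕜 K f) :
    ConvexOn 𝕜 {p : 𝕜 × E | 0 < p.1 ∧ p.1⁻¹ • p.2 ∈ K} fun p => p.1 • f (p.1⁻¹ • p.2) := by
  refine ⟨convex_perspective_domain hf.1, ?_⟩
  rintro ⟨s, x⟩ ⟨hs : 0 < s, hx⟩ ⟨t, y⟩ ⟨ht : 0 < t, hy⟩ a b ha hb hab
  have hr : 0 < a * s + b * t := combo_pos ha hb hab hs ht
  calc (a * s + b * t) • f ((a * s + b * t)⁻¹ • (a • x + b • y))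
      ≤ (a * s + b * t) • ((a * s / (a * s + b * t)) • f (s⁻¹ • x) +
          (b * t / (a * s + b * t)) • f (t⁻¹ • y)) := by
        rw [inv_smul_combo_eq_combo_inv_smul hs.ne' ht.ne']
        exact smul_le_smul_of_nonneg_left
          ((convexOn_iff_div.1 hf).2 hx hy (by positivity) (by positivity) hr) hr.le
    _ = a • s • f (s⁻¹ • x) + b • t • f (t⁻¹ • y) := by
        simp only [smul_add, smul_smul, mul_div_cancel₀ _ hr.ne']

end Perspective

section LogIntegralExp

variable {Ω : Type*} [MeasurableSpace Ω] {μ : Measure Ω} {f g : Ω → ℝ}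

theorem exp_combo_le {a b : ℝ} (ha : 0 ≤ a) (hb : 0 ≤ b) (hab : a + b = 1) (x y : ℝ) :
    exp (a * x + b * y) ≤ a * exp x + b * exp y :=
  convexOn_exp.2 (Set.mem_univ x) (Set.mem_univ y) ha hb hab

theorem convex_setOf_integrable_exp :
    Convex ℝ {f : Ω → ℝ | Integrable (fun ω => exp (f ω)) μ} := by
  intro f hf g hg a b ha hb hab
  have hfm : AEMeasurable f μ := aemeasurable_of_aemeasurable_exp hf.aemeasurable
  have hgm : AEMeasurable g μ := aemeasurable_of_aemeasurable_exp hg.aemeasurable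
  refine ((hf.const_mul a).add (hg.const_mul b)).mono'
    ((hfm.const_smul a).add (hgm.const_smul b)).exp.aestronglyMeasurable (.of_forall fun ω => ?_)
  rw [norm_of_nonneg (exp_nonneg _)]
  exact exp_combo_le ha hb hab (f ω) (g ω)

theorem convexOn_integral_exp :
    ConvexOn ℝ {f : Ω → ℝ | Integrable (fun ω => exp (f ω)) μ} fun f => ∫ ω, exp (f ω) ∂μ := by
  refine ⟨convex_setOf_integrable_exp, fun f hf g hg a b ha hb hab => ?_⟩
  calc ∫ ω, exp ((a • f + b • g) ω) ∂μ
      ≤ ∫ ω, (a * exp (f ω) + b * exp (g ω)) ∂μ :=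
        integral_mono (convex_setOf_integrable_exp hf hg ha hb hab)
          ((hf.const_mul a).add (hg.const_mul b)) fun ω => exp_combo_le ha hb hab (f ω) (g ω)
    _ = a • ∫ ω, exp (f ω) ∂μ + b • ∫ ω, exp (g ω) ∂μ := by
        rw [integral_add (hf.const_mul a) (hg.const_mul b), integral_const_mul, integral_const_mul,
          smul_eq_mul, smul_eq_mul]

theorem integrable_exp_sub_const (hf : Integrable (fun ω => exp (f ω)) μ) (c : ℝ) :
    Integrable (fun ω => exp (f ω - c)) μ := by
  simpa only [exp_sub] using hf.div_const (exp c)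

theorem integral_exp_sub_const (f : Ω → ℝ) (c : ℝ) :
    ∫ ω, exp (f ω - c) ∂μ = (∫ ω, exp (f ω) ∂μ) / exp c := by
  simp only [exp_sub, integral_div]

theorem integral_exp_sub_log_integral_exp [NeZero μ] (hf : Integrable (fun ω => exp (f ω)) μ) :
    ∫ ω, exp (f ω - log (∫ ω', exp (f ω') ∂μ)) ∂μ = 1 := by
  rw [integral_exp_sub_const, exp_log (integral_exp_pos hf), div_self (integral_exp_pos hf).ne']

theorem convexOn_log_integral_exp [NeZero μ] :
    ConvexOn ℝ {f : Ω → ℝ | Integrable (fun ω => exp (f ω)) μ}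
      fun f => log (∫ ω, exp (f ω) ∂μ) := by
  refine ⟨convex_setOf_integrable_exp, fun f hf g hg a b ha hb hab => ?_⟩
  set c := log (∫ ω, exp (f ω) ∂μ)
  set d := log (∫ ω, exp (g ω) ∂μ)
  have integral_normalized_le_one :
      ∫ ω, exp (a * (f ω - c) + b * (g ω - d)) ∂μ ≤ 1 := by
    calc ∫ ω, exp (a * (f ω - c) + b * (g ω - d)) ∂μ
        ≤ a * ∫ ω, exp (f ω - c) ∂μ + b * ∫ ω, exp (g ω - d) ∂μ :=
          convexOn_integral_exp.2 (integrable_exp_sub_const hf c) (integrable_exp_sub_const hg d)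
            ha hb hab
      _ = 1 := by
          rw [integral_exp_sub_log_integral_exp hf, integral_exp_sub_log_integral_exp hg,
            mul_one, mul_one, hab]
  have combo_sub (ω : Ω) : a * (f ω - c) + b * (g ω - d) =
      (a • f + b • g) ω - (a • c + b • d) := by
    simp only [Pi.add_apply, Pi.smul_apply, smul_eq_mul]
    ring
  rw [log_le_iff_le_exp (integral_exp_pos (convex_setOf_integrable_exp hf hg ha hb hab))]
  simpa only [combo_sub, integral_exp_sub_const, div_le_one (exp_pos _)]
    using integral_normalized_le_one

end LogIntegralExp

section CertaintyEquivalent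

variable {Ω : Type*} [MeasurableSpace Ω]

theorem integrable_exp_div_of_abs_le {μ : Measure Ω} [IsFiniteMeasure μ] {X : Ω → ℝ} {C : ℝ}
    (hX : AEMeasurable X μ) (hC : ∀ᵐ ω ∂μ, |X ω| ≤ C) (α : ℝ) :
    Integrable (fun ω => exp (X ω / α)) μ := by
  simpa only [div_eq_inv_mul] using ProbabilityTheory.integrable_exp_mul_of_mem_Icc (t := α⁻¹) hX
    (hC.mono fun ω hω => abs_le.1 hω)

/-- The certainty equivalent `C_α(X)` under exponential disutility, for an arbitrary measure in
place of `P`. It has this meaning only for `α ≠ 0` and `exp (X / α)` integrable: division by zero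
and the Bochner integral of a non-integrable function are both `0`. -/
noncomputable def certaintyEquivalent (μ : Measure Ω) (α : ℝ) (X : Ω → ℝ) : ℝ :=
  α * log (∫ ω, exp (X ω / α) ∂μ)

theorem certainty_equivalent_jointly_convex_general (μ : Measure Ω) [NeZero μ] :
    ConvexOn ℝ {p : ℝ × (Ω → ℝ) | 0 < p.1 ∧ Integrable (fun ω => exp (p.2 ω / p.1)) μ}
      fun p => certaintyEquivalent μ p.1 p.2 := by
  simpa only [certaintyEquivalent, div_eq_inv_mul, Set.mem_ofPred_eq, Pi.smul_apply, smul_eq_mul]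
    using convexOn_perspective (convexOn_log_integral_exp (μ := μ))

end CertaintyEquivalent

/-- Joint convexity of the certainty equivalent `C_α(X) = α * log (E_P[exp (X/α)])`:
for bounded random variables `X₁, X₂` on a common probability space, `α₁, α₂ > 0` and
`λ ∈ [0,1]`, with `β = λ·α₁ + (1−λ)·α₂`, one has
`C_β(λ·X₁ + (1−λ)·X₂) ≤ λ·C_{α₁}(X₁) + (1−λ)·C_{α₂}(X₂)`. -/
theorem certainty_equivalent_jointly_convex
    {Ω : Type*} [MeasurableSpace Ω] (P : Measure Ω) [IsProbabilityMeasure P]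
    (X₁ X₂ : Ω → ℝ) (hX₁ : Measurable X₁) (hX₂ : Measurable X₂)
    (C₁ C₂ : ℝ) (hC₁ : ∀ ω, |X₁ ω| ≤ C₁) (hC₂ : ∀ ω, |X₂ ω| ≤ C₂)
    (α₁ α₂ : ℝ) (hα₁ : 0 < α₁) (hα₂ : 0 < α₂)
    (l : ℝ) (hl₀ : 0 ≤ l) (hl₁ : l ≤ 1)
    (β : ℝ) (hβ : β = l * α₁ + (1 - l) * α₂) :
    β * Real.log (∫ ω, Real.exp ((l * X₁ ω + (1 - l) * X₂ ω) / β) ∂P) ≤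
      l * (α₁ * Real.log (∫ ω, Real.exp (X₁ ω / α₁) ∂P)) +
        (1 - l) * (α₂ * Real.log (∫ ω, Real.exp (X₂ ω / α₂) ∂P)) := by
  subst hβ
  exact (certainty_equivalent_jointly_convex_general P).2
    (x := (α₁, X₁)) ⟨hα₁, integrable_exp_div_of_abs_le hX₁.aemeasurable (.of_forall hC₁) α₁⟩
    (y := (α₂, X₂)) ⟨hα₂, integrable_exp_div_of_abs_le hX₂.aemeasurable (.of_forall hC₂) α₂⟩
    hl₀ (sub_nonneg.2 hl₁) (add_sub_cancel l 1)
end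

section
/- Let a < b be real numbers and let m ∈ [a, b]. Define the two-point measure P₀ = ((b − m)/(b − a))·δ_a + ((m − a)/(b − a))·δ_b, where δ_x denotes the Dirac measure at x. Then P₀ is a probability measure on ℝ with P₀([a, b]) = 1, mean ∫ x dP₀(x) = m, and for every λ ∈ ℝ, ∫ exp(λx) dP₀(x) = ((b − m)·exp(λa) + (m − a)·exp(λb)) / (b − a). Consequently the supremum of ∫ exp(λx) dP(x) over all probability measures P supported on [a, b] with mean m equals ((b − m)·exp(λa) + (m − a)·exp(λb)) / (b − a). -/
open MeasureTheory Real

/-!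
On `[a, b]` a convex function lies below its chord. The chord is affine, so its integral against a
probability measure depends only on the mean, and it bounds the integral of the convex function from
above. The two-point measure charges only the endpoints, where function and chord agree, so it
attains the bound. The exponential moment is the case of `x ↦ exp (l * x)`.
-/

open ProbabilityTheory Set

/-- The affine function of `x` agreeing with `f` at `a` and `b`, through which the extremal value is
expressed. For `a = b` the division makes it `0`. -/
noncomputable def chord (f : ℝ → ℝ) (a b x : ℝ) : ℝ :=
  ((b - x) * f a + (x - a) * f b) / (b - a)

/-- The measure carried by `{a, b}` with mean `m`, the extremal distribution among those on `[a, b]`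
with that mean. This reading needs `a < b` and `m ∈ [a, b]`: `ENNReal.ofReal` truncates negative
weights, and both weights are `0` for `a = b`. -/
noncomputable def twoPointMeasure (a b m : ℝ) : Measure ℝ :=
  ENNReal.ofReal ((b - m) / (b - a)) • Measure.dirac a +
    ENNReal.ofReal ((m - a) / (b - a)) • Measure.dirac b

section ConvexMoments

variable {a b m : ℝ} {f : ℝ → ℝ}

section Chord

theorem chord_id (hab : a ≠ b) (x : ℝ) : chord id a b x = x := by
  have hba : b - a ≠ 0 := sub_ne_zero.2 hab.symm
  simp only [chord, id_eq]
  field_simp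
  ring

theorem le_chord_of_convexOn (hab : a < b) (hf : ConvexOn ℝ (Icc a b) f) {x : ℝ}
    (hx : x ∈ Icc a b) : f x ≤ chord f a b x := by
  have hba : 0 < b - a := sub_pos.2 hab
  have weights_sum : (b - x) / (b - a) + (x - a) / (b - a) = 1 := by
    field_simp
    ring
  calc f x = f ((b - x) / (b - a) * a + (x - a) / (b - a) * b) := by
        congr 1
        field_simp
        ring
    _ ≤ (b - x) / (b - a) * f a + (x - a) / (b - a) * f b :=
        hf.2 (left_mem_Icc.2 hab.le) (right_mem_Icc.2 hab.le)
          (div_nonneg (sub_nonneg.2 hx.2) hba.le) (div_nonneg (sub_nonneg.2 hx.1) hba.le)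
          weights_sum
    _ = chord f a b x := by
        rw [chord]
        ring

variable {P : Measure ℝ}

theorem integrable_chord [IsFiniteMeasure P] (hP : Integrable (fun x ↦ x) P) (f : ℝ → ℝ) (a b : ℝ) :
    Integrable (chord f a b) P :=
  ((((integrable_const b).sub hP).mul_const _).add
    ((hP.sub (integrable_const a)).mul_const _)).div_const _

theorem integral_chord [IsProbabilityMeasure P] (hP : Integrable (fun x ↦ x) P) (f : ℝ → ℝ)
    (a b : ℝ) : ∫ x, chord f a b x ∂P = chord f a b (∫ x, x ∂P) := by
  have left : Integrable (fun x ↦ b - x) P := (integrable_const b).sub hP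
  have right : Integrable (fun x ↦ x - a) P := hP.sub (integrable_const a)
  simp only [chord]
  rw [integral_div, integral_add (left.mul_const _) (right.mul_const _), integral_mul_const,
    integral_mul_const, integral_sub (integrable_const b) hP, integral_sub hP (integrable_const a)]
  simp

end Chord

section ConvexOn

theorem measurable_domRestrict_of_convexOn {s : Set ℝ} (hf : ConvexOn ℝ s f) :
    Measurable (s.domRestrict f) := by
  refine measurable_of_Iic fun r ↦ ?_
  have sublevel : MeasurableSet {x | x ∈ s ∧ f x ≤ r} := (hf.convex_le r).ordConnected.measurableSet
  have preimage_eq : s.domRestrict f ⁻¹' Iic r = (↑) ⁻¹' {x | x ∈ s ∧ f x ≤ r} := by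
    ext x
    simp
  exact preimage_eq ▸ measurable_subtype_coe sublevel

theorem exists_forall_mem_Icc_of_convexOn (hf : ConvexOn ℝ (Icc a b) f) :
    ∃ c C, ∀ x ∈ Icc a b, f x ∈ Icc c C := by
  set C := max (f a) (f b)
  have le_C {x : ℝ} (hx : x ∈ Icc a b) : f x ≤ C :=
    have hab : a ≤ b := hx.1.trans hx.2
    hf.le_max_of_mem_Icc (left_mem_Icc.2 hab) (right_mem_Icc.2 hab) hx
  refine ⟨2 * f ((a + b) / 2) - C, C, fun x hx ↦ ⟨?_, le_C hx⟩⟩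
  -- The midpoint of `[a, b]` is also the midpoint of `x` and its reflection `a + b - x`.
  have reflection_mem : a + b - x ∈ Icc a b := ⟨by linarith [hx.2], by linarith [hx.1]⟩
  have midpoint_le : f ((a + b) / 2) ≤ 1 / 2 * f x + 1 / 2 * f (a + b - x) :=
    calc f ((a + b) / 2) = f (1 / 2 * x + 1 / 2 * (a + b - x)) := by
          congr 1
          ring
      _ ≤ 1 / 2 * f x + 1 / 2 * f (a + b - x) :=
          hf.2 hx reflection_mem (by norm_num) (by norm_num) (by norm_num)
  linarith [le_C reflection_mem]

theorem integrableOn_Icc_of_convexOn {μ : Measure ℝ} [IsFiniteMeasureOnCompacts μ]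
    (hf : ConvexOn ℝ (Icc a b) f) : IntegrableOn f (Icc a b) μ := by
  obtain ⟨c, C, hcC⟩ := exists_forall_mem_Icc_of_convexOn hf
  have : IsFiniteMeasure (μ.restrict (Icc a b)) :=
    isFiniteMeasure_restrict.2 isCompact_Icc.measure_ne_top
  exact Integrable.of_mem_Icc c C
    (aemeasurable_restrict_of_measurable_subtype measurableSet_Icc
      (measurable_domRestrict_of_convexOn hf))
    (ae_restrict_of_forall_mem measurableSet_Icc hcC)

theorem integral_le_chord_of_convexOn {P : Measure ℝ} [IsProbabilityMeasure P] (hab : a < b)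
    (hP : ∀ᵐ x ∂P, x ∈ Icc a b) (hf : ConvexOn ℝ (Icc a b) f) :
    ∫ x, f x ∂P ≤ chord f a b (∫ x, x ∂P) := by
  have id_integrable : Integrable (fun x ↦ x) P := Integrable.of_mem_Icc a b aemeasurable_id hP
  have f_integrable : Integrable f P := by
    rw [← Measure.restrict_eq_self_of_ae_mem hP]
    exact integrableOn_Icc_of_convexOn hf
  calc ∫ x, f x ∂P ≤ ∫ x, chord f a b x ∂P :=
        integral_mono_ae f_integrable (integrable_chord id_integrable f a b)
          (hP.mono fun _ ↦ le_chord_of_convexOn hab hf)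
    _ = chord f a b (∫ x, x ∂P) := integral_chord id_integrable f a b

end ConvexOn

section TwoPointMeasure

theorem sub_div_sub_mem_unitInterval (hm : m ∈ Icc a b) : (m - a) / (b - a) ∈ unitInterval :=
  unitInterval.div_mem (sub_nonneg.2 hm.1) (sub_nonneg.2 (hm.1.trans hm.2))
    (sub_le_sub_right hm.2 a)

theorem twoPointMeasure_eq_bernoulliMeasure (hab : a < b) (hm : m ∈ Icc a b) :
    twoPointMeasure a b m =
      bernoulliMeasure b a ⟨(m - a) / (b - a), sub_div_sub_mem_unitInterval hm⟩ := by
  have weight_a : (b - m) / (b - a) = 1 - (m - a) / (b - a) := by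
    rw [one_sub_div (sub_pos.2 hab).ne', sub_sub_sub_cancel_right]
  have weight_b_mem := sub_div_sub_mem_unitInterval hm
  rw [twoPointMeasure, weight_a, ENNReal.ofReal_eq_coe_nnreal weight_b_mem.1,
    ENNReal.ofReal_eq_coe_nnreal (sub_nonneg.2 weight_b_mem.2), add_comm]
  rfl

theorem isProbabilityMeasure_twoPointMeasure (hab : a < b) (hm : m ∈ Icc a b) :
    IsProbabilityMeasure (twoPointMeasure a b m) := by
  rw [twoPointMeasure_eq_bernoulliMeasure hab hm]
  infer_instance

theorem twoPointMeasure_Icc (hab : a < b) (hm : m ∈ Icc a b) :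
    twoPointMeasure a b m (Icc a b) = 1 := by
  rw [twoPointMeasure_eq_bernoulliMeasure hab hm]
  exact bernoulliMeasure_apply_of_mem_of_mem _ measurableSet_Icc (right_mem_Icc.2 hab.le)
    (left_mem_Icc.2 hab.le)

theorem integral_twoPointMeasure (hab : a < b) (hm : m ∈ Icc a b) (f : ℝ → ℝ) :
    ∫ x, f x ∂(twoPointMeasure a b m) = chord f a b m := by
  have hba : b - a ≠ 0 := (sub_pos.2 hab).ne'
  rw [twoPointMeasure_eq_bernoulliMeasure hab hm, integral_bernoulliMeasure, chord]
  simp only [smul_eq_mul]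
  field_simp
  ring

theorem integral_id_twoPointMeasure (hab : a < b) (hm : m ∈ Icc a b) :
    ∫ x, x ∂(twoPointMeasure a b m) = m :=
  (integral_twoPointMeasure hab hm id).trans (chord_id hab.ne m)

end TwoPointMeasure

theorem two_point_measure_achieves_sup_exp_moment_general (hab : a < b) (hm : m ∈ Icc a b) :
    IsProbabilityMeasure (twoPointMeasure a b m) ∧
    twoPointMeasure a b m (Icc a b) = 1 ∧
    ∫ x, x ∂(twoPointMeasure a b m) = m ∧
    (∀ f : ℝ → ℝ, ∫ x, f x ∂(twoPointMeasure a b m) = chord f a b m) ∧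
    (∀ f : ℝ → ℝ, ConvexOn ℝ (Icc a b) f →
      IsGreatest
        {r : ℝ | ∃ P : Measure ℝ, IsProbabilityMeasure P ∧ P (Icc a b) = 1 ∧
          ∫ x, x ∂P = m ∧ r = ∫ x, f x ∂P}
        (chord f a b m)) := by
  have prob := isProbabilityMeasure_twoPointMeasure hab hm
  have supp := twoPointMeasure_Icc hab hm
  have mean := integral_id_twoPointMeasure hab hm
  have value := integral_twoPointMeasure hab hm
  refine ⟨prob, supp, mean, value, fun f hf ↦ ⟨⟨_, prob, supp, mean, (value f).symm⟩, ?_⟩⟩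
  rintro _ ⟨P, hP, hP_supp, rfl, rfl⟩
  exact integral_le_chord_of_convexOn hab ((mem_ae_iff_prob_eq_one measurableSet_Icc).2 hP_supp) hf

end ConvexMoments

theorem convexOn_exp_mul (l : ℝ) : ConvexOn ℝ univ fun x ↦ exp (l * x) :=
  convexOn_exp.comp_linearMap (LinearMap.mulLeft ℝ l)

/-- Let `a < b` and `m ∈ [a, b]`. The two-point measure
`P₀ = ((b − m)/(b − a))·δ_a + ((m − a)/(b − a))·δ_b` is a probability measure supported on
`[a, b]` with mean `m`, whose exponential moment `∫ exp (λ x) dP₀(x)` equals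
`((b − m)·exp (λ a) + (m − a)·exp (λ b)) / (b − a)`; consequently this value is the supremum
(indeed the greatest value) of `∫ exp (λ x) dP(x)` over all probability measures `P`
supported on `[a, b]` with mean `m`. -/
theorem two_point_measure_achieves_sup_exp_moment
    (a b m : ℝ) (hab : a < b) (hma : a ≤ m) (hmb : m ≤ b) :
    let P₀ : Measure ℝ :=
      ENNReal.ofReal ((b - m) / (b - a)) • Measure.dirac a +
        ENNReal.ofReal ((m - a) / (b - a)) • Measure.dirac b
    IsProbabilityMeasure P₀ ∧
    P₀ (Set.Icc a b) = 1 ∧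
    (∫ x, x ∂P₀) = m ∧
    (∀ l : ℝ,
      (∫ x, Real.exp (l * x) ∂P₀) =
        ((b - m) * Real.exp (l * a) + (m - a) * Real.exp (l * b)) / (b - a)) ∧
    (∀ l : ℝ,
      IsGreatest
        {r : ℝ | ∃ P : Measure ℝ, IsProbabilityMeasure P ∧ P (Set.Icc a b) = 1 ∧
          (∫ x, x ∂P) = m ∧ r = ∫ x, Real.exp (l * x) ∂P}
        (((b - m) * Real.exp (l * a) + (m - a) * Real.exp (l * b)) / (b - a))) := by
  obtain ⟨prob, supp, mean, value, greatest⟩ :=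
    two_point_measure_achieves_sup_exp_moment_general hab ⟨hma, hmb⟩
  exact ⟨prob, supp, mean, fun l ↦ value _, fun l ↦
    greatest _ ((convexOn_exp_mul l).subset (subset_univ _) (convex_Icc a b))⟩
end

section
/- Let X be a bounded real-valued random variable on a probability space (Ω, F, P) and let τ ∈ ℝ. Then P(X ≤ τ) = 1 if and only if for every α > 0 one has α · log E_P[exp(X/α)] ≤ τ. (Equivalently, the Requirements Violation index ρ_τ(X) = inf { α > 0 : C_α(X) ≤ τ } equals 0 exactly when the target τ is met almost surely.) -/
open MeasureTheory Real

/-!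
With `t = 1 / α`, the condition `C_α(X) ≤ τ` says that the cumulant generating function satisfies
`cgf X P t ≤ t * τ`. This follows from `X ≤ τ` almost surely by monotonicity. Conversely, the
Chernoff bound turns it into `P (τ + ε ≤ X) ≤ exp (-t * ε)` for every `ε > 0`, and the right-hand
side vanishes as `t → ∞`, that is, as `α → 0`.
-/

section CumulantGeneratingFunction

open ProbabilityTheory Filter Topology

variable {Ω : Type*} [MeasurableSpace Ω] {P : Measure Ω} {X : Ω → ℝ} {t α τ : ℝ}

theorem cgf_le_mul_of_ae_le [IsProbabilityMeasure P] (ht : 0 ≤ t)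
    (h_int : Integrable (fun ω => exp (t * X ω)) P) (hXτ : ∀ᵐ ω ∂P, X ω ≤ τ) :
    cgf X P t ≤ t * τ := by
  have mgf_le : mgf X P t ≤ exp (t * τ) :=
    (mgf_mono_of_nonneg hXτ ht (integrable_const _)).trans_eq (mgf_const τ)
  exact (log_le_iff_le_exp (mgf_pos h_int)).2 mgf_le

theorem measureReal_ge_le_exp_neg_mul_of_cgf_le [IsFiniteMeasure P] (ht : 0 ≤ t)
    (h_int : Integrable (fun ω => exp (t * X ω)) P) (h_cgf : cgf X P t ≤ t * τ) (ε : ℝ) :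
    P.real {ω | τ + ε ≤ X ω} ≤ exp (-(t * ε)) :=
  calc P.real {ω | τ + ε ≤ X ω}
      ≤ exp (-t * (τ + ε) + cgf X P t) := measure_ge_le_exp_cgf _ ht h_int
    _ ≤ exp (-(t * ε)) := exp_le_exp.2 (by linarith)

theorem ae_le_of_frequently_cgf_le [IsFiniteMeasure P]
    (h_cgf : ∃ᶠ t in atTop, Integrable (fun ω => exp (t * X ω)) P ∧ cgf X P t ≤ t * τ) :
    ∀ᵐ ω ∂P, X ω ≤ τ := by
  refine (ae_le_const_iff_forall_gt_measure_zero X τ).2 fun b hb => ?_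
  have tail_le : ∃ᶠ t in atTop, P.real {ω | b ≤ X ω} ≤ exp (-(t * (b - τ))) := by
    refine (h_cgf.and_eventually (eventually_ge_atTop 0)).mono fun t ⟨⟨h_int, h_le⟩, ht⟩ => ?_
    simpa only [add_sub_cancel] using
      measureReal_ge_le_exp_neg_mul_of_cgf_le ht h_int h_le (b - τ)
  have exp_tendsto : Tendsto (fun t : ℝ => exp (-(t * (b - τ)))) atTop (𝓝 0) :=
    tendsto_exp_neg_atTop_nhds_zero.comp (tendsto_id.atTop_mul_const (sub_pos.2 hb))
  have tail_nonpos : P.real {ω | b ≤ X ω} ≤ 0 := ge_of_tendsto_of_frequently exp_tendsto tail_le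
  exact (measureReal_eq_zero_iff).1 (tail_nonpos.antisymm measureReal_nonneg)

theorem ae_le_iff_forall_cgf_le [IsProbabilityMeasure P]
    (h_int : ∀ t, 0 < t → Integrable (fun ω => exp (t * X ω)) P) :
    (∀ᵐ ω ∂P, X ω ≤ τ) ↔ ∀ t, 0 < t → cgf X P t ≤ t * τ where
  mp hXτ t ht := cgf_le_mul_of_ae_le ht.le (h_int t ht) hXτ
  mpr h_cgf := ae_le_of_frequently_cgf_le <| Eventually.frequently <|
    (eventually_gt_atTop 0).mono fun t ht => ⟨h_int t ht, h_cgf t ht⟩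

theorem mul_log_integral_exp_div_le_iff_cgf_inv_le (hα : 0 < α) :
    α * log (∫ ω, exp (X ω / α) ∂P) ≤ τ ↔ cgf X P α⁻¹ ≤ α⁻¹ * τ := by
  simp only [cgf, mgf, div_eq_inv_mul, le_inv_mul_iff₀ hα]

theorem integrable_exp_div_of_ae_le [IsFiniteMeasure P] (hα : 0 ≤ α) (hX : AEMeasurable X P)
    (hXτ : ∀ᵐ ω ∂P, X ω ≤ τ) : Integrable (fun ω => exp (X ω / α)) P := by
  simpa only [div_eq_inv_mul] using integrable_exp_mul_of_le α⁻¹ τ (inv_nonneg.2 hα) hX hXτ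

theorem prob_le_eq_one_iff_ae_le [IsProbabilityMeasure P] (hX : AEMeasurable X P) :
    P {ω | X ω ≤ τ} = 1 ↔ ∀ᵐ ω ∂P, X ω ≤ τ :=
  (mem_ae_iff_prob_eq_one₀ (nullMeasurableSet_le hX aemeasurable_const)).symm

end CumulantGeneratingFunction

theorem rv_index_full_satisfaction_general
    {Ω : Type*} [MeasurableSpace Ω] (P : Measure Ω) [IsProbabilityMeasure P] (X : Ω → ℝ)
    (h_int : ∀ α : ℝ, 0 < α → Integrable (fun ω => exp (X ω / α)) P) (τ : ℝ) :
    P {ω | X ω ≤ τ} = 1 ↔ ∀ α : ℝ, 0 < α → α * log (∫ ω, exp (X ω / α) ∂P) ≤ τ := by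
  have hX : AEMeasurable X P :=
    aemeasurable_of_aemeasurable_exp (by simpa using (h_int 1 one_pos).aemeasurable)
  have h_int_mul (t : ℝ) (ht : 0 < t) : Integrable (fun ω => exp (t * X ω)) P := by
    simpa only [div_inv_eq_mul, mul_comm] using h_int t⁻¹ (inv_pos.2 ht)
  rw [prob_le_eq_one_iff_ae_le hX, ae_le_iff_forall_cgf_le h_int_mul, inv_surjective.forall]
  simp only [inv_pos]
  exact forall₂_congr fun α hα => (mul_log_integral_exp_div_le_iff_cgf_inv_le hα).symm

/-- Full satisfaction: for a bounded random variable `X` on a probability space `(Ω, F, P)` and a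
target `τ`, one has `P(X ≤ τ) = 1` if and only if `C_α(X) = α * log E_P[exp (X/α)] ≤ τ` for every
`α > 0` (i.e. the Requirements Violation index `ρ_τ(X)` equals `0` exactly when the target is met
almost surely). -/
theorem rv_index_full_satisfaction
    {Ω : Type*} [MeasurableSpace Ω] (P : Measure Ω) [IsProbabilityMeasure P]
    (X : Ω → ℝ) (hX : Measurable X) (C : ℝ) (hC : ∀ ω, |X ω| ≤ C) (τ : ℝ) :
    P {ω | X ω ≤ τ} = 1 ↔
      ∀ α : ℝ, 0 < α → α * Real.log (∫ ω, Real.exp (X ω / α) ∂P) ≤ τ :=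
  rv_index_full_satisfaction_general P X (fun _ hα => integrable_exp_div_of_ae_le hα.le
    hX.aemeasurable (.of_forall fun ω => (le_abs_self _).trans (hC ω))) τ
end

section
/- Let Y be a nonempty set, τ ∈ ℝ, and g : ℝ × Y → ℝ such that for each y ∈ Y the map α ↦ g(α, y) is strictly decreasing on [0, ∞). Let f : Y → [0, ∞) satisfy g(f(y), y) = τ for every y ∈ Y. Suppose s ∈ Y satisfies g(f(s), s) ≤ g(f(s), y) for all y ∈ Y (i.e., s minimizes y ↦ g(f(s), y) over Y). Then f(s) ≤ f(y) for all y ∈ Y; that is, a fixed point of the Repeated-Prim iteration is a global minimizer of f over Y. -/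
theorem repeated_prim_fixed_point_optimal_general
    {Y A B : Type*} [LinearOrder A] [Preorder B] {D : Set A} (g : A → Y → B) (τ : B)
    (hstrict : ∀ y : Y, StrictAntiOn (fun α => g α y) D)
    (f : Y → A) (hfD : ∀ y, f y ∈ D) (hfτ : ∀ y, g (f y) y = τ)
    (s : Y) (hmin : ∀ y : Y, g (f s) s ≤ g (f s) y) :
    ∀ y : Y, f s ≤ f y := by
  intro y
  have value_le : g (f y) y ≤ g (f s) y :=
    calc
      g (f y) y = τ := hfτ y
      _ = g (f s) s := (hfτ s).symm
      _ ≤ g (f s) y := hmin y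
  exact ((hstrict y).le_iff_ge (hfD y) (hfD s)).mp value_le

/-- A fixed point of the Repeated-Prim iteration is a global minimizer: let `Y` be nonempty,
`g : ℝ × Y → ℝ` with `α ↦ g (α, y)` strictly decreasing on `[0, ∞)` for each `y`, and
`f : Y → [0, ∞)` with `g (f y, y) = τ` for every `y`. If `s` minimizes `y ↦ g (f s, y)` over
`Y`, then `f s ≤ f y` for all `y ∈ Y`. -/
theorem repeated_prim_fixed_point_optimal
    {Y : Type*} [Nonempty Y] (g : ℝ → Y → ℝ) (τ : ℝ)
    (hstrict : ∀ y : Y, StrictAntiOn (fun α => g α y) (Set.Ici 0))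
    (f : Y → ℝ) (hf0 : ∀ y, 0 ≤ f y) (hfτ : ∀ y, g (f y) y = τ)
    (s : Y) (hmin : ∀ y : Y, g (f s) s ≤ g (f s) y) :
    ∀ y : Y, f s ≤ f y :=
  repeated_prim_fixed_point_optimal_general g τ hstrict f hf0 hfτ s hmin
end
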